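/- Exhaustive blocked clause elimination is not symmetry-lifting: there exist CNF formulas F and F' such that F' is obtained from F by exhaustively removing blocked clauses and some semantic symmetry of F', extended by the identity on Lit(F) ∖ Lit(F'), is not a semantic symmetry of F (witnessed by F = (x∨z)∧(ȳ∨z)∧(ȳ∨z̄)∧(y∨a)∧(y∨b)∧(ā∨b̄∨c̄)∧(c∨ȳ), where after eliminating the clauses containing the pure literal x the transposition exchanging z and z̄ is a syntactic and hence semantic symmetry of F', but is not a semantic symmetry of F). -/

import Mathlib

/-- A literal over a variable type `V`: a variable or its negation. -/
inductive Lit (V : Type) where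
  | pos : V → Lit V
  | neg : V → Lit V
deriving DecidableEq

variable {V : Type} [DecidableEq V]

/-- Negation of a literal (so that double negation is the identity). -/
def Lit.negate : Lit V → Lit V
  | .pos v => .neg v
  | .neg v => .pos v

/-- The underlying variable of a literal. -/
def Lit.var : Lit V → V
  | .pos v => v
  | .neg v => v

/-- A clause is a finite set of literals. -/
abbrev Clause (V : Type) := Finset (Lit V)

/-- A CNF formula is a finite set of clauses. -/
abbrev CNF (V : Type) := Finset (Clause V)

/-- `Var(F)`: the variables occurring in a formula. -/
def CNF.vars (F : CNF V) : Finset V := Finset.sup F (fun C => Finset.image Lit.var C)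

/-- `Lit(F) = Var(F) ∪ {v̄ : v ∈ Var(F)}`. -/
def CNF.lits (F : CNF V) : Finset (Lit V) :=
  Finset.image Lit.pos (CNF.vars F) ∪ Finset.image Lit.neg (CNF.vars F)

/-- The value of a literal under a complete assignment (given on the variables,
which determines a consistent complete assignment on all literals). -/
def Lit.val (σ : V → Bool) : Lit V → Bool
  | .pos v => σ v
  | .neg v => !(σ v)

/-- `C[σ]`: delete from `C` every literal mapped to `⊥` by `σ`
(i.e. keep `l` with `¬l ∉ σ`). -/
def Clause.reduce (σ : V → Bool) (C : Clause V) : Clause V :=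
  Finset.filter (fun l => Lit.val σ (Lit.negate l) = false) C

/-- `F[σ]`: delete every clause containing a literal mapped to `⊤` by `σ`
(for a complete assignment: every clause containing no false literal is kept)
and delete from each remaining clause every literal mapped to `⊥`. -/
def CNF.reduce (F : CNF V) (σ : V → Bool) : CNF V :=
  Finset.image (Clause.reduce σ) (Finset.filter (fun C => ∀ l ∈ C, Lit.val σ l = false) F)

/-- Apply a map on literals elementwise to clauses and formulas. -/
def CNF.map (φ : Lit V → Lit V) (F : CNF V) : CNF V :=
  Finset.image (fun C => Finset.image φ C) F

/-- `φ` is a syntactic symmetry of `F`: a bijection of `Lit(F)` respecting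
negation with `φ(F) = F`. -/
def IsSynSym (F : CNF V) (φ : Lit V → Lit V) : Prop :=
  Set.BijOn φ (CNF.lits F : Set (Lit V)) (CNF.lits F : Set (Lit V)) ∧
  (∀ l ∈ CNF.lits F, φ (Lit.negate l) = Lit.negate (φ l)) ∧
  CNF.map φ F = F

/-- `φ` is a semantic symmetry of `F`: a bijection of `Lit(F)` respecting
negation with `F[σ] = φ(F)[σ]` for every complete assignment `σ`. -/
def IsSemSym (F : CNF V) (φ : Lit V → Lit V) : Prop :=
  Set.BijOn φ (CNF.lits F : Set (Lit V)) (CNF.lits F : Set (Lit V)) ∧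
  (∀ l ∈ CNF.lits F, φ (Lit.negate l) = Lit.negate (φ l)) ∧
  ∀ σ : V → Bool, CNF.reduce F σ = CNF.reduce (CNF.map φ F) σ

/-- Extend a map defined on the literal set `S` by the identity outside `S`. -/
def extendId (S : Finset (Lit V)) (φ : Lit V → Lit V) : Lit V → Lit V :=
  fun l => if l ∈ S then φ l else l

/-- `F[l ↦ ⊤]`: delete every clause containing `l` and delete `l̄` from every
remaining clause. -/
def CNF.assignTrue (F : CNF V) (l : Lit V) : CNF V :=
  Finset.image (fun C => Finset.erase C (Lit.negate l)) (Finset.filter (fun C => l ∉ C) F)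

/-- A clause is a tautology if it contains some literal with its negation. -/
def IsTaut (C : Clause V) : Prop := ∃ l ∈ C, Lit.negate l ∈ C

/-- `l ∈ C` blocks `C` in `F`: every resolvent of `C` on `l` with a clause of
`F` containing `l̄` is a tautology. -/
def Blocks (F : CNF V) (l : Lit V) (C : Clause V) : Prop :=
  l ∈ C ∧ ∀ C' ∈ F, Lit.negate l ∈ C' → IsTaut (C.erase l ∪ C'.erase (Lit.negate l))

/-- One application of blocked clause elimination: remove a blocked clause. -/
def BCEStep (F F' : CNF V) : Prop :=
  ∃ C ∈ F, (∃ l : Lit V, Blocks F l C) ∧ F' = F.erase C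

/-- The part of the formula left after blocked clause elimination, with
`x, y, z, a, b, c` being `0, 1, 2, 3, 4, 5`. -/
def exG : CNF ℕ :=
  {{.neg 1, .pos 2}, {.neg 1, .neg 2}, {.pos 1, .pos 3}, {.pos 1, .pos 4},
    {.neg 3, .neg 4, .neg 5}, {.pos 5, .neg 1}}

/-- The witness formula. -/
def exF : CNF ℕ := insert {.pos 0, .pos 2} exG

/-- The transposition exchanging `z` and its negation. -/
def exPhi (l : Lit ℕ) : Lit ℕ := if l.var = 2 then l.negate else l

instance decTaut (C : Clause ℕ) : Decidable (IsTaut C) := by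
  unfold IsTaut; infer_instance

instance decBlocks (F : CNF ℕ) (l : Lit ℕ) (C : Clause ℕ) : Decidable (Blocks F l C) := by
  unfold Blocks; infer_instance

theorem exPhi_invol (l : Lit ℕ) : exPhi (exPhi l) = l := by
  cases l <;> simp only [exPhi, Lit.var] <;> split_ifs <;> simp_all [Lit.negate, Lit.var]

theorem exPhi_neg (l : Lit ℕ) : exPhi l.negate = (exPhi l).negate := by
  rcases l with v | v <;> by_cases h : v = 2 <;> simp [exPhi, Lit.var, Lit.negate, h]

set_option maxRecDepth 100000

theorem exPhi_mem : ∀ l ∈ CNF.lits exG, exPhi l ∈ CNF.lits exG := by decide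

theorem exG_map : CNF.map exPhi exG = exG := by decide

theorem exG_noblock : ∀ C ∈ exG, ∀ l ∈ C, ¬ Blocks exG l C := by decide

/-- Exhaustive blocked clause elimination is not
symmetry-lifting: there are CNF formulas `F, F'` such that `F'` is obtained
from `F` by exhaustively removing blocked clauses, and some semantic symmetry
of `F'`, extended by the identity on `Lit(F) ∖ Lit(F')`, is not a semantic
symmetry of `F`. -/
theorem exhaustive_bce_not_symmetry_lifting :
    ∃ F F' : CNF ℕ,
      Relation.ReflTransGen BCEStep F F' ∧
      (¬ ∃ C ∈ F', ∃ l : Lit ℕ, Blocks F' l C) ∧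
      ∃ φ : Lit ℕ → Lit ℕ, IsSemSym F' φ ∧
        ¬ IsSemSym F (extendId (CNF.lits F') φ) := by
  refine ⟨exF, exG, Relation.ReflTransGen.single ?_, ?_, exPhi, ⟨⟨?_, ?_, ?_⟩, ?_, ?_⟩, ?_⟩
  · exact ⟨{.pos 0, .pos 2}, by decide, ⟨.pos 0, by decide⟩, by decide⟩
  · rintro ⟨C, hC, l, hl⟩
    exact exG_noblock C hC l hl.1 hl
  · exact fun l hl => exPhi_mem l hl
  · intro l _ m _ h
    rw [← exPhi_invol l, h, exPhi_invol]
  · exact fun l hl => ⟨exPhi l, exPhi_mem l hl, exPhi_invol l⟩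
  · exact fun l _ => exPhi_neg l
  · intro σ
    rw [exG_map]
  · rintro ⟨-, -, h⟩
    have := h (fun n => decide (n = 2 ∨ n = 3 ∨ n = 4))
    revert this
    decide
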